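/- Let X be the coded shift over the alphabet {0,1} generated by G = {(000)^k 1^k : k ∈ ℕ}, and let φ : X → ℝ be given by φ(x) = 1 if x_0 = 1 and φ(x) = 0 if x_0 = 0. Then P_top(X,φ) = 1 (attained by the Dirac measure at the fixed point 1^∞), while P_seq(φ) ≤ 1/4 + log 2 < 1 and P_top(X_m, φ|_{X_m}) ≤ 1/4 + log 2 for every m ∈ ℕ. In particular φ ∉ FSP(X), i.e. P_seq(φ) < P_top(X,φ). -/

import Mathlib

open Filter MeasureTheory Topology
open scoped BigOperators ENNReal

noncomputable section

namespace PaperStmt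

/-- The full two-sided shift: bi-infinite sequences over the alphabet `Fin d`. -/
abbrev FullShift (d : ℕ) := ℤ → Fin d

/-- The (left) shift map `f(x)_k = x_{k+1}`. -/
def shift (d : ℕ) : FullShift d → FullShift d := fun x k => x (k + 1)

/-- A (two-sided) shift space: a nonempty closed shift-invariant subset. -/
def IsShiftSpace {d : ℕ} (X : Set (FullShift d)) : Prop :=
  X.Nonempty ∧ IsClosed X ∧ shift d '' X = X

/-- The cylinder at position `0` determined by a word `w` of length `n`. -/
def cyl {d n : ℕ} (w : Fin n → Fin d) : Set (FullShift d) :=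
  {x | ∀ i : Fin n, x ((i : ℕ) : ℤ) = w i}

/-- The language of `X` in length `n`: words of length `n` occurring in elements of `X`
(at position `0`; for shift-invariant `X` this is occurrence anywhere). -/
def langSet {d : ℕ} (X : Set (FullShift d)) (n : ℕ) : Set (Fin n → Fin d) :=
  {w | (X ∩ cyl w).Nonempty}

/-- Birkhoff sum `S_n φ`. -/
def birkhoff {d : ℕ} (φ : FullShift d → ℝ) (n : ℕ) (x : FullShift d) : ℝ :=
  ∑ k ∈ Finset.range n, φ ((shift d)^[k] x)

open Classical in
/-- The `n`-th partition function `Z_n(φ)` of `X`. -/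
def Zfun {d : ℕ} (X : Set (FullShift d)) (φ : FullShift d → ℝ) (n : ℕ) : ℝ :=
  ∑ w : Fin n → Fin d,
    if (X ∩ cyl w).Nonempty then Real.exp (sSup (birkhoff φ n '' (X ∩ cyl w))) else 0

/-- Topological pressure `P_top(X,φ) = lim (1/n) log Z_n(φ) = inf_n (1/n) log Z_n(φ)`. -/
def pressure {d : ℕ} (X : Set (FullShift d)) (φ : FullShift d → ℝ) : ℝ :=
  ⨅ n : ℕ, (1 / (n + 1 : ℝ)) * Real.log (Zfun X φ (n + 1))

/-- Topological entropy `h_top(X) = inf_n (1/n) log |L(X,n)|`. -/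
def entTop {d : ℕ} (X : Set (FullShift d)) : ℝ :=
  ⨅ n : ℕ, (1 / (n + 1 : ℝ)) * Real.log ((langSet X (n + 1)).ncard : ℝ)

/-- The shift-invariant Borel probability measures giving `X` full measure. -/
def InvProb {d : ℕ} (X : Set (FullShift d)) : Set (Measure (FullShift d)) :=
  {μ | IsProbabilityMeasure μ ∧ μ.map (shift d) = μ ∧ μ X = 1}

/-- Measure-theoretic (Kolmogorov–Sinai) entropy of an invariant measure,
computed via cylinder sets: `h_μ = lim -(1/n) Σ_{|w|=n} μ[w] log μ[w]`. -/
def mEnt {d : ℕ} (μ : Measure (FullShift d)) : ℝ :=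
  Filter.liminf
    (fun n : ℕ => (1 / (n + 1 : ℝ)) *
      ∑ w : Fin (n + 1) → Fin d, Real.negMulLog (μ (cyl w)).toReal)
    Filter.atTop

/-- The free energy `h_μ(f) + ∫ φ dμ` of an invariant measure. -/
def freeEnergy {d : ℕ} (μ : Measure (FullShift d)) (φ : FullShift d → ℝ) : ℝ :=
  mEnt μ + ∫ x, φ x ∂μ

/-- `sup { ∫ φ dμ : μ ∈ M_X }`. -/
def intAvg {d : ℕ} (X : Set (FullShift d)) (φ : FullShift d → ℝ) : ℝ :=
  sSup {r | ∃ μ ∈ InvProb X, r = ∫ x, φ x ∂μ}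

/-- `μ` is an equilibrium state of `φ` on `X`. -/
def IsEqState {d : ℕ} (X : Set (FullShift d)) (φ : FullShift d → ℝ)
    (μ : Measure (FullShift d)) : Prop :=
  μ ∈ InvProb X ∧ freeEnergy μ φ = pressure X φ

/-- `p : ℤ → ℤ` parses `x` into consecutive generator blocks from `𝒢`:
the block of `x` from `p j` to `p (j+1) - 1` is a generator, for every `j`. -/
def IsParsing {d : ℕ} (𝒢 : Set (List (Fin d))) (x : FullShift d) (p : ℤ → ℤ) : Prop :=
  StrictMono p ∧ ∀ j : ℤ, ∃ g ∈ 𝒢,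
    p (j + 1) = p j + g.length ∧ ∀ (l : ℕ) (hl : l < g.length), x (p j + l) = g[l]

/-- `X_seq`: the set of bi-infinite concatenations of generators. -/
def Xseq {d : ℕ} (𝒢 : Set (List (Fin d))) : Set (FullShift d) :=
  {x | ∃ p : ℤ → ℤ, IsParsing 𝒢 x p}

/-- The coded shift generated by `𝒢`: the closure of `X_seq`. -/
def codedShift {d : ℕ} (𝒢 : Set (List (Fin d))) : Set (FullShift d) :=
  closure (Xseq 𝒢)

/-- `𝒢` is a unique representation: every `x ∈ X_seq` admits exactly one parsing
into generator blocks (i.e. the set of cut points is uniquely determined). -/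
def UniqueRep {d : ℕ} (𝒢 : Set (List (Fin d))) : Prop :=
  ∀ (x : FullShift d) (p q : ℤ → ℤ),
    IsParsing 𝒢 x p → IsParsing 𝒢 x q → Set.range p = Set.range q

/-- `P_seq(φ) = sup { h_μ + ∫φ dμ : μ ∈ M_X, μ(Xs) = 1 }`. -/
def PseqOf {d : ℕ} (X Xs : Set (FullShift d)) (φ : FullShift d → ℝ) : ℝ :=
  sSup {r | ∃ μ ∈ InvProb X, μ Xs = 1 ∧ r = freeEnergy μ φ}

/-- `P_lim(φ) = sup { h_μ + ∫φ dμ : μ ∈ M_X, μ(X \ Xs) = 1 }`. -/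
def PlimOf {d : ℕ} (X Xs : Set (FullShift d)) (φ : FullShift d → ℝ) : ℝ :=
  sSup {r | ∃ μ ∈ InvProb X, μ (X \ Xs) = 1 ∧ r = freeEnergy μ φ}

/-- `φ` has strict full sequential pressure: `P_seq(φ) > P_lim(φ)`. -/
def StrictFSP {d : ℕ} (X Xs : Set (FullShift d)) (φ : FullShift d → ℝ) : Prop :=
  PlimOf X Xs φ < PseqOf X Xs φ

/-- `φ ∈ FSSP(X)`: `φ` lies in the sup-norm closure (within `C(X,ℝ)`) of the
set of continuous potentials with strict full sequential pressure. -/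
def InFSSP {d : ℕ} (X Xs : Set (FullShift d)) (φ : FullShift d → ℝ) : Prop :=
  ∀ ε : ℝ, 0 < ε → ∃ ψ : FullShift d → ℝ, ContinuousOn ψ X ∧
    (∀ x ∈ X, |φ x - ψ x| ≤ ε) ∧ StrictFSP X Xs ψ

/-- The invariant probability measure equidistributed on the (period-`ℓ`) orbit of `y`. -/
def periodicMeasure {d : ℕ} (y : FullShift d) (ℓ : ℕ) : Measure (FullShift d) :=
  (ℓ : ℝ≥0∞)⁻¹ • ∑ k ∈ Finset.range ℓ, Measure.dirac ((shift d)^[k] y)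

/-- `y` is periodic with period `ℓ ≥ 1`. -/
def IsPeriodicOf {d : ℕ} (y : FullShift d) (ℓ : ℕ) : Prop :=
  1 ≤ ℓ ∧ (shift d)^[ℓ] y = y


/-- The generators `(000)^k 1^k`, `k ≥ 1` (here indexed by `k ∈ ℕ` via `k+1`). -/
def exG : ℕ → List (Fin 2) := fun k =>
  List.replicate (3 * (k + 1)) (0 : Fin 2) ++ List.replicate (k + 1) (1 : Fin 2)

/-- The potential `φ(x) = 1` if `x_0 = 1` and `φ(x) = 0` if `x_0 = 0`. -/
def exφ : FullShift 2 → ℝ := fun x => if x 0 = 1 then 1 else 0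


/-!
At most a quarter of the letters in any prefix of a generator `(000)^k 1^k` are ones, so to the
right of any cut point of a concatenation the frequency of ones is at most `1/4`. An invariant
measure on `X_seq` therefore has `∫ φ ≤ 1/4`, while its entropy is at most `log 2`. For `X_m` the
same count works on words of length `n`, because the incomplete block they begin with has bounded
length. For `X` itself that initial piece `0^i 1^j` can be arbitrarily long; summing over its shape
gives at most `(n+1)^2` terms, each at most `e^n` because `2 e^{1/4} < e`. Hence `P_top(X, φ) ≤ 1`,
with equality because `1^∞`, as a limit of ever longer blocks of ones, lies in `X`.
-/

/-! ### Birkhoff sums -/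

section BirkhoffSum

variable {Ω : Type*} {T : Ω → Ω} {φ : Ω → ℝ} {x : Ω} {t : ℕ} {a M : ℝ}

theorem birkhoffSum_le_mul (hM : ∀ x, φ x ≤ M) (n : ℕ) (x : Ω) :
    birkhoffSum T φ n x ≤ n * M := by
  simpa [birkhoffSum] using Finset.sum_le_card_nsmul (Finset.range n) _ M fun k _ => hM (T^[k] x)

theorem birkhoffSum_le_of_tail_le (hM : ∀ x, φ x ≤ M)
    (htail : ∀ n, birkhoffSum T φ n (T^[t] x) ≤ n * a) (n : ℕ) :
    birkhoffSum T φ n x ≤ (min n t : ℕ) * M + (n - t : ℕ) * a := by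
  rcases le_total n t with h | h
  · simpa [h] using birkhoffSum_le_mul hM n x
  · obtain ⟨r, rfl⟩ := Nat.exists_eq_add_of_le h
    rw [birkhoffSum_add, min_eq_right h, Nat.add_sub_cancel_left]
    exact add_le_add (birkhoffSum_le_mul hM t x) (htail r)

theorem eventually_birkhoffAverage_lt_of_tail_le
    (htail : ∀ n, birkhoffSum T φ n (T^[t] x) ≤ n * a) {b : ℝ} (hb : a < b) :
    ∀ᶠ n in atTop, birkhoffAverage ℝ T φ n x < b := by
  have hlim : Tendsto (fun n : ℕ => (birkhoffSum T φ t x - t * a) / n + a) atTop (𝓝 a) := by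
    simpa using (tendsto_const_div_atTop_nhds_zero_nat (birkhoffSum T φ t x - t * a)).add_const a
  filter_upwards [hlim.eventually_lt_const hb, eventually_ge_atTop t, eventually_gt_atTop 0]
    with n hn htn hpos
  refine lt_of_le_of_lt ?_ hn
  have hpos' : (0 : ℝ) < n := by exact_mod_cast hpos
  have hsum : birkhoffSum T φ n x ≤ birkhoffSum T φ t x + (n - t) * a := by
    have h := htail (n - t)
    rw [Nat.cast_sub htn] at h
    rw [← Nat.add_sub_cancel' htn, birkhoffSum_add, Nat.add_sub_cancel' htn]
    linarith
  rw [birkhoffAverage, smul_eq_mul, inv_mul_eq_div, div_add' _ _ _ hpos'.ne']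
  gcongr
  linarith

variable [MeasurableSpace Ω] {μ : Measure Ω}

theorem integrable_birkhoffSum (hT : MeasurePreserving T μ μ) (hφ : Integrable φ μ) (n : ℕ) :
    Integrable (birkhoffSum T φ n) μ :=
  integrable_finsetSum _ fun k _ => (hT.iterate k).integrable_comp_of_integrable hφ

theorem integral_birkhoffSum (hT : MeasurePreserving T μ μ) (hφ : Integrable φ μ) (n : ℕ) :
    ∫ x, birkhoffSum T φ n x ∂μ = n * ∫ x, φ x ∂μ := by
  have hiter : ∀ k, ∫ x, φ (T^[k] x) ∂μ = ∫ x, φ x ∂μ := fun k => by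
    have hk := hT.iterate k
    rw [← integral_map hk.aemeasurable (hk.map_eq.symm ▸ hφ.aestronglyMeasurable), hk.map_eq]
  simp only [birkhoffSum]
  rw [integral_finsetSum (f := fun k x => φ (T^[k] x)) _
    fun k _ => (hT.iterate k).integrable_comp_of_integrable hφ]
  simp [hiter]

theorem integral_le_of_ae_birkhoffAverage_lt [IsProbabilityMeasure μ]
    (hT : MeasurePreserving T μ μ) (hφ : Integrable φ μ) (hM : ∀ x, φ x ≤ M)
    (h : ∀ᵐ x ∂μ, ∀ b > a, ∀ᶠ n in atTop, birkhoffAverage ℝ T φ n x < b) :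
    ∫ x, φ x ∂μ ≤ a := by
  -- The averages `A_n` need not converge, but `max A_n a` tends to `a` and is bounded, so that
  -- dominated convergence applies to it.
  have havg_int : ∀ n, Integrable (birkhoffAverage ℝ T φ n) μ := fun n =>
    (integrable_birkhoffSum hT hφ n).smul (n : ℝ)⁻¹
  have hmax_int : ∀ n, Integrable (fun x => max (birkhoffAverage ℝ T φ n x) a) μ := fun n =>
    (havg_int n).sup (integrable_const a)
  have hlim : Tendsto (fun n => ∫ x, max (birkhoffAverage ℝ T φ n x) a ∂μ) atTop (𝓝 a) := by
    have hbound : ∀ᶠ n : ℕ in atTop, ∀ᵐ x ∂μ,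
        ‖max (birkhoffAverage ℝ T φ n x) a‖ ≤ max |a| |max M a| := by
      filter_upwards [eventually_gt_atTop 0] with n hn
      refine Eventually.of_forall fun x => abs_le_max_abs_abs (le_max_right _ _) ?_
      refine max_le_max_right a ?_
      have hn' : (0 : ℝ) < n := by exact_mod_cast hn
      rw [birkhoffAverage, smul_eq_mul, inv_mul_le_iff₀ hn']
      exact birkhoffSum_le_mul hM n x
    have hae : ∀ᵐ x ∂μ, Tendsto (fun n => max (birkhoffAverage ℝ T φ n x) a) atTop (𝓝 a) := by
      filter_upwards [h] with x hx
      exact tendsto_order.mpr ⟨fun b hb => .of_forall fun n => hb.trans_le (le_max_right _ _),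
        fun b hb => (hx b hb).mono fun n hn => max_lt hn hb⟩
    simpa using tendsto_integral_filter_of_dominated_convergence _
      (.of_forall fun n => (hmax_int n).aestronglyMeasurable) hbound (integrable_const _) hae
  refine ge_of_tendsto hlim ?_
  filter_upwards [eventually_ne_atTop 0] with n hn
  calc ∫ x, φ x ∂μ = ∫ x, birkhoffAverage ℝ T φ n x ∂μ := by
        simp only [birkhoffAverage, smul_eq_mul]
        rw [integral_const_mul, integral_birkhoffSum hT hφ,
          inv_mul_cancel_left₀ (Nat.cast_ne_zero.mpr hn)]
    _ ≤ ∫ x, max (birkhoffAverage ℝ T φ n x) a ∂μ :=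
        integral_mono (havg_int n) (hmax_int n) fun x => le_max_left _ _

end BirkhoffSum

/-! ### Cylinders -/

section Cylinder

variable {d n : ℕ}

theorem shift_iterate_apply (k : ℕ) (x : FullShift d) (j : ℤ) :
    (shift d)^[k] x j = x (j + k) := by
  induction k generalizing x with
  | zero => simp
  | succ k ih =>
    rw [Function.iterate_succ_apply, ih, shift]
    push_cast
    ring_nf

theorem continuous_shift : Continuous (shift d) := by
  unfold shift
  fun_prop

theorem birkhoff_eq_birkhoffSum (φ : FullShift d → ℝ) (n : ℕ) (x : FullShift d) :
    birkhoff φ n x = birkhoffSum (shift d) φ n x :=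
  rfl

theorem continuous_birkhoff {φ : FullShift d → ℝ} (hφ : Continuous φ) (n : ℕ) :
    Continuous (birkhoff φ n) :=
  continuous_finsetSum _ fun k _ => hφ.comp (continuous_shift.iterate k)

theorem birkhoff_shift_iterate (ψ : Fin d → ℝ) (n t : ℕ) (x : FullShift d) :
    birkhoff (fun y => ψ (y 0)) n ((shift d)^[t] x)
      = ∑ i ∈ Finset.range n, ψ (x ((t : ℤ) + i)) := by
  simp only [birkhoff, shift_iterate_apply, zero_add, add_comm (t : ℤ)]

/-- The word `x_0 x_1 … x_{n-1}`; the cylinders of length `n` are its fibres. -/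
def initialWord (n : ℕ) (x : FullShift d) : Fin n → Fin d := fun i => x i

theorem mem_cyl_iff {w : Fin n → Fin d} {x : FullShift d} : x ∈ cyl w ↔ initialWord n x = w :=
  funext_iff.symm

theorem cyl_eq_preimage (w : Fin n → Fin d) : cyl w = initialWord n ⁻¹' {w} :=
  Set.ext fun _ => mem_cyl_iff

theorem continuous_initialWord : Continuous (initialWord n : FullShift d → Fin n → Fin d) := by
  unfold initialWord
  fun_prop

theorem isOpen_cyl (w : Fin n → Fin d) : IsOpen (cyl w) :=
  cyl_eq_preimage w ▸ (isOpen_discrete {w}).preimage continuous_initialWord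

theorem sum_measure_cyl (μ : Measure (FullShift d)) [IsProbabilityMeasure μ] (n : ℕ) :
    ∑ w : Fin n → Fin d, (μ (cyl w)).toReal = 1 := by
  have h := sum_measureReal_preimage_singleton (μ := μ) Finset.univ (f := initialWord n)
    fun w _ => cyl_eq_preimage w ▸ (isOpen_cyl w).measurableSet
  simpa [← cyl_eq_preimage, measureReal_def] using h

theorem card_filter_forall_lt_eq {α : Type*} [Fintype α] [DecidableEq α] (t : ℕ)
    (u : Fin n → α) :
    (Finset.univ.filter fun w : Fin n → α => ∀ l : Fin n, (l : ℕ) < t → w l = u l).card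
      = Fintype.card α ^ (n - t) := by
  have hpi : (Finset.univ.filter fun w : Fin n → α => ∀ l : Fin n, (l : ℕ) < t → w l = u l)
      = Fintype.piFinset fun l : Fin n => if (l : ℕ) < t then {u l} else Finset.univ := by
    ext w
    simp only [Finset.mem_filter, Finset.mem_univ, true_and, Fintype.mem_piFinset]
    refine forall_congr' fun l => ?_
    split_ifs with h <;> simp [h]
  have hfree : (Finset.univ.filter fun l : Fin n => ¬(l : ℕ) < t).card = n - t := by
    have hsplit := Finset.card_filter_add_card_filter_not (s := .univ) fun l : Fin n => (l : ℕ) < t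
    rw [Fin.card_filter_val_lt, Finset.card_univ, Fintype.card_fin] at hsplit
    omega
  rw [hpi, Fintype.card_piFinset]
  simp only [apply_ite Finset.card, Finset.card_singleton, Finset.card_univ, Finset.prod_ite,
    Finset.prod_const_one, Finset.prod_const, one_mul, hfree]

end Cylinder

/-! ### Pressure -/

section Pressure

variable {d : ℕ} {X Y : Set (FullShift d)} {φ : FullShift d → ℝ} {x : FullShift d}

theorem isLittleO_log_add_one :
    (fun n : ℕ => Real.log (n + 1)) =o[atTop] fun n : ℕ => (n : ℝ) := by
  have hlog : (fun n : ℕ => Real.log (n + 1)) =o[atTop] fun n : ℕ => (n : ℝ) + 1 :=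
    Real.isLittleO_log_id_atTop.comp_tendsto
      (tendsto_atTop_add_const_right _ 1 tendsto_natCast_atTop_atTop)
  refine hlog.trans_isBigO (.of_bound 2 ?_)
  filter_upwards [eventually_ge_atTop 1] with n hn
  have : (1 : ℝ) ≤ n := by exact_mod_cast hn
  rw [Real.norm_of_nonneg (by positivity), Real.norm_of_nonneg (by positivity)]
  linarith

theorem Zfun_nonneg (X : Set (FullShift d)) (φ : FullShift d → ℝ) (n : ℕ) : 0 ≤ Zfun X φ n :=
  Finset.sum_nonneg fun w _ => by split_ifs <;> positivity

theorem Zfun_empty (φ : FullShift d → ℝ) (n : ℕ) : Zfun ∅ φ n = 0 := by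
  simp [Zfun]

theorem exp_birkhoff_le_Zfun (hφ : Continuous φ) (hx : x ∈ X) (n : ℕ) :
    Real.exp (birkhoff φ n x) ≤ Zfun X φ n := by
  have hx_cyl : x ∈ X ∩ cyl (initialWord n x) := ⟨hx, mem_cyl_iff.mpr rfl⟩
  have hbdd : BddAbove (birkhoff φ n '' (X ∩ cyl (initialWord n x))) :=
    (isCompact_range (continuous_birkhoff hφ n)).bddAbove.mono (Set.image_subset_range _ _)
  refine le_trans ?_ (Finset.single_le_sum (fun w _ => ?_) (Finset.mem_univ (initialWord n x)))
  · rw [if_pos ⟨x, hx_cyl⟩]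
    exact Real.exp_le_exp.mpr (le_csSup hbdd (Set.mem_image_of_mem _ hx_cyl))
  · split_ifs <;> positivity

theorem le_pressure_of_isFixedPt (hφ : Continuous φ) (hx : x ∈ X)
    (hfix : Function.IsFixedPt (shift d) x) : φ x ≤ pressure X φ := by
  refine le_ciInf fun n => ?_
  have h := Real.log_le_log (Real.exp_pos _) (exp_birkhoff_le_Zfun hφ hx (n + 1))
  rw [Real.log_exp, birkhoff_eq_birkhoffSum, hfix.birkhoffSum_eq, nsmul_eq_mul] at h
  push_cast at h
  rwa [one_div, le_inv_mul_iff₀ (by positivity)]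

theorem bddBelow_range_log_Zfun (hφ : Continuous φ) :
    BddBelow (Set.range fun n : ℕ => (1 / (n + 1 : ℝ)) * Real.log (Zfun X φ (n + 1))) := by
  rcases X.eq_empty_or_nonempty with rfl | ⟨x, hx⟩
  · exact ⟨0, by simp [Zfun_empty]⟩
  obtain ⟨M, hM⟩ := isCompact_univ.exists_bound_of_continuousOn hφ.continuousOn
  refine ⟨-M, Set.forall_mem_range.mpr fun n => ?_⟩
  have hsum : birkhoff (fun y => -φ y) (n + 1) x ≤ (n + 1 : ℕ) * M :=
    birkhoffSum_le_mul (fun y => (neg_le_abs _).trans (hM y trivial)) _ _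
  have hlog := Real.log_le_log (Real.exp_pos _) (exp_birkhoff_le_Zfun hφ hx (n + 1))
  rw [Real.log_exp] at hlog
  simp only [birkhoff, Finset.sum_neg_distrib] at hsum hlog
  push_cast at hsum
  rw [one_div, le_inv_mul_iff₀ (by positivity)]
  linarith

theorem pressure_le_of_Zfun_le_exp (hφ : Continuous φ) {c : ℝ} (hc : 0 ≤ c) {b : ℕ → ℝ}
    (hb : b =o[atTop] fun n : ℕ => (n : ℝ)) (h : ∀ n, Zfun X φ n ≤ Real.exp (n * c + b n)) :
    pressure X φ ≤ c := by
  have hlim : Tendsto (fun n : ℕ => c + |b (n + 1)| / (n + 1 : ℕ)) atTop (𝓝 c) := by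
    simpa using (hb.norm_left.tendsto_div_nhds_zero.comp (tendsto_add_atTop_nat 1)).const_add c
  refine ge_of_tendsto' hlim fun n => (ciInf_le (bddBelow_range_log_Zfun hφ) n).trans ?_
  have hlog : Real.log (Zfun X φ (n + 1)) ≤ (n + 1 : ℕ) * c + |b (n + 1)| := by
    rcases (Zfun_nonneg X φ (n + 1)).eq_or_lt' with h0 | hpos
    · rw [h0, Real.log_zero]
      positivity
    · rw [Real.log_le_iff_le_exp hpos]
      exact (h (n + 1)).trans (Real.exp_le_exp.mpr (by gcongr; exact le_abs_self _))
  have hn : (0 : ℝ) < n + 1 := by positivity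
  push_cast at hlog ⊢
  rw [one_div, inv_mul_le_iff₀ hn, mul_add, mul_div_cancel₀ _ hn.ne']
  exact hlog

theorem Zfun_closure_le_sum (hφ : Continuous φ) {n : ℕ} {ι : Type*} {s : Finset ι}
    {W : ι → Finset (Fin n → Fin d)} {b : ι → ℝ}
    (hcover : ∀ y ∈ Y, ∃ i ∈ s, initialWord n y ∈ W i ∧ birkhoff φ n y ≤ b i) :
    Zfun (closure Y) φ n ≤ ∑ i ∈ s, (W i).card * Real.exp (b i) := by
  classical
  let F : (Fin n → Fin d) → ℝ := fun w => ∑ i ∈ s, if w ∈ W i then Real.exp (b i) else 0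
  have hF_nonneg : ∀ i w, 0 ≤ if w ∈ W i then Real.exp (b i) else 0 := fun i w => by
    split_ifs <;> positivity
  have hF : ∀ y ∈ Y, Real.exp (birkhoff φ n y) ≤ F (initialWord n y) := fun y hy => by
    obtain ⟨i, hi, hyW, hyb⟩ := hcover y hy
    refine le_trans ?_ (Finset.single_le_sum (fun i _ => hF_nonneg i _) hi)
    rw [if_pos hyW]
    exact Real.exp_le_exp.mpr hyb
  calc Zfun (closure Y) φ n ≤ ∑ w, F w := by
        refine Finset.sum_le_sum fun w _ => ?_
        split_ifs with hne
        · obtain ⟨y, hyY, hyw⟩ := (closure_inter_open_nonempty_iff (isOpen_cyl w)).mp hne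
          have hFw : 0 < F w := (Real.exp_pos _).trans_le (mem_cyl_iff.mp hyw ▸ hF y hyY)
          -- Cylinders are open and `φ` is continuous: bounds on `Y ∩ cyl w` pass to the closure.
          have hsub : closure Y ∩ cyl w ⊆ {z | birkhoff φ n z ≤ Real.log (F w)} := by
            refine (isOpen_cyl w).closure_inter.trans (closure_minimal ?_
              (isClosed_le (continuous_birkhoff hφ n) continuous_const))
            rintro z ⟨hzY, hzw⟩
            exact (Real.le_log_iff_exp_le hFw).mpr (mem_cyl_iff.mp hzw ▸ hF z hzY)
          rw [← Real.le_log_iff_exp_le hFw]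
          exact csSup_le (hne.image _) (Set.forall_mem_image.mpr hsub)
        · exact Finset.sum_nonneg fun i _ => hF_nonneg i w
    _ = ∑ i ∈ s, (W i).card * Real.exp (b i) := by
        rw [Finset.sum_comm]
        simp

end Pressure

/-! ### Entropy -/

section Entropy

variable {d : ℕ}

theorem sum_negMulLog_le_log_card {ι : Type*} [Fintype ι] {q : ι → ℝ} (hq_nonneg : ∀ i, 0 ≤ q i)
    (hq_sum : ∑ i, q i = 1) : ∑ i, Real.negMulLog (q i) ≤ Real.log (Fintype.card ι) := by
  have : Nonempty ι := by
    by_contra! hempty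
    simp at hq_sum
  have hcard : (0 : ℝ) < Fintype.card ι := by exact_mod_cast Fintype.card_pos
  have hjensen := Real.concaveOn_negMulLog.le_map_sum (t := Finset.univ)
    (w := fun _ : ι => (Fintype.card ι : ℝ)⁻¹) (p := q) (fun _ _ => by positivity)
    (by simp [hcard.ne']) (fun i _ => hq_nonneg i)
  simp only [smul_eq_mul, ← Finset.mul_sum, hq_sum, mul_one] at hjensen
  rw [Real.negMulLog, Real.log_inv, neg_mul_neg] at hjensen
  exact le_of_mul_le_mul_left hjensen (by positivity)

theorem mEnt_le_log (μ : Measure (FullShift d)) [IsProbabilityMeasure μ] :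
    mEnt μ ≤ Real.log d := by
  have hblock : ∀ n : ℕ, (1 / (n + 1 : ℝ)) *
      ∑ w : Fin (n + 1) → Fin d, Real.negMulLog (μ (cyl w)).toReal ≤ Real.log d := fun n => by
    have h := sum_negMulLog_le_log_card (fun w => ENNReal.toReal_nonneg) (sum_measure_cyl μ (n + 1))
    simp only [Fintype.card_fun, Fintype.card_fin, Nat.cast_pow, Real.log_pow] at h
    push_cast at h
    rwa [one_div, inv_mul_le_iff₀ (by positivity)]
  have hblock_nonneg : ∀ n : ℕ, 0 ≤ (1 / (n + 1 : ℝ)) *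
      ∑ w : Fin (n + 1) → Fin d, Real.negMulLog (μ (cyl w)).toReal := fun n =>
    mul_nonneg (by positivity) (Finset.sum_nonneg fun w _ =>
      Real.negMulLog_nonneg ENNReal.toReal_nonneg measureReal_le_one)
  refine liminf_le_of_le ⟨0, eventually_map.mpr (.of_forall hblock_nonneg)⟩ fun b hb => ?_
  obtain ⟨n, hn⟩ := hb.exists
  exact hn.trans (hblock n)

theorem mEnt_dirac (x : FullShift d) : mEnt (Measure.dirac x) = 0 := by
  have h : ∀ n : ℕ, ∀ w : Fin n → Fin d,
      Real.negMulLog ((Measure.dirac x) (cyl w)).toReal = 0 := fun n w => by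
    rw [Measure.dirac_apply' _ (isOpen_cyl w).measurableSet]
    by_cases hx : x ∈ cyl w <;> simp [hx]
  simp only [mEnt, h, Finset.sum_const_zero, mul_zero, liminf_const]

theorem isEqState_dirac {X : Set (FullShift d)} {φ : FullShift d → ℝ} {x : FullShift d}
    (hx : x ∈ X) (hfix : Function.IsFixedPt (shift d) x) (hφ : φ x = pressure X φ) :
    IsEqState X φ (Measure.dirac x) := by
  refine ⟨⟨inferInstance, ?_, Measure.dirac_apply_of_mem hx⟩, ?_⟩
  · rw [Measure.map_dirac' continuous_shift.measurable, hfix]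
  · rw [freeEnergy, mEnt_dirac, integral_dirac, zero_add, hφ]

theorem PseqOf_le_of_integral_le {X Xs : Set (FullShift d)} {φ : FullShift d → ℝ} {a : ℝ}
    (ha : 0 ≤ a) (h : ∀ μ ∈ InvProb X, μ Xs = 1 → ∫ x, φ x ∂μ ≤ a) :
    PseqOf X Xs φ ≤ a + Real.log d := by
  have hlog : 0 ≤ Real.log d := Real.log_natCast_nonneg d
  refine Real.sSup_le ?_ (add_nonneg ha hlog)
  rintro _ ⟨μ, hμ, hXs, rfl⟩
  have := hμ.1
  rw [freeEnergy, add_comm]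
  exact add_le_add (h μ hμ hXs) (mEnt_le_log μ)

end Entropy

/-! ### Coded shifts -/

section CodedShift

variable {d : ℕ} {𝒢 : Set (List (Fin d))} {ψ : Fin d → ℝ} {a : ℝ} {x : FullShift d} {p : ℤ → ℤ}

/-- Every generator in `𝒢` has all of its prefixes of `ψ`-average at most `a`. -/
def PrefixAverageLE (𝒢 : Set (List (Fin d))) (ψ : Fin d → ℝ) (a : ℝ) : Prop :=
  ∀ g ∈ 𝒢, ∀ n ≤ g.length, ((g.take n).map ψ).sum ≤ n * a

theorem continuous_comp_apply_zero (ψ : Fin d → ℝ) :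
    Continuous fun x : FullShift d => ψ (x 0) :=
  continuous_of_discreteTopology.comp (continuous_apply 0)

theorem sum_range_eq_sum_take {g : List (Fin d)} {b : ℤ}
    (h : ∀ (l : ℕ) (hl : l < g.length), x (b + l) = g[l]) {n : ℕ} (hn : n ≤ g.length)
    (ψ : Fin d → ℝ) : ∑ i ∈ Finset.range n, ψ (x (b + i)) = ((g.take n).map ψ).sum := by
  have htake : g.take n = (List.range n).map fun i : ℕ => x (b + i) := by
    refine List.ext_getElem (by simpa using hn) fun l hl _ => ?_
    rw [List.length_take] at hl
    simp [h l (by omega)]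
  rw [htake, List.map_map]
  rfl

theorem PrefixAverageLE.sum_le_of_isParsing (h : PrefixAverageLE 𝒢 ψ a) (hp : IsParsing 𝒢 x p)
    (n : ℕ) (j : ℤ) : ∑ i ∈ Finset.range n, ψ (x (p j + i)) ≤ n * a := by
  induction n using Nat.strong_induction_on generalizing j with
  | _ n ih =>
    obtain ⟨g, hg, hnext, hblock⟩ := hp.2 j
    rcases le_total n g.length with hn | hn
    · rw [sum_range_eq_sum_take hblock hn]
      exact h g hg n hn
    · obtain ⟨r, rfl⟩ := Nat.exists_eq_add_of_le hn
      have hpos : p j < p (j + 1) := hp.1 (lt_add_one j)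
      have hfirst : ∑ i ∈ Finset.range g.length, ψ (x (p j + i)) ≤ g.length * a := by
        rw [sum_range_eq_sum_take hblock le_rfl]
        exact h g hg _ le_rfl
      have hrest : ∑ i ∈ Finset.range r, ψ (x (p j + (g.length + i : ℕ))) ≤ r * a := by
        simpa only [hnext, Nat.cast_add, add_assoc] using ih r (by omega) (j + 1)
      rw [Finset.sum_range_add, Nat.cast_add, add_mul]
      exact add_le_add hfirst hrest

theorem exists_le_lt_of_strictMono (hp : StrictMono p) (b : ℤ) : ∃ j, p j ≤ b ∧ b < p (j + 1) := by
  have hmono : Monotone fun j => p j - j := monotone_int_of_le_succ fun j => by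
    have := hp (lt_add_one j)
    omega
  have hbdd : ∀ j, p j ≤ b → j ≤ max 0 (b - p 0) := fun j hj => by
    rcases le_total j 0 with h | h
    · exact h.trans (le_max_left _ _)
    · have : p 0 - 0 ≤ p j - j := hmono h
      omega
  have hexists : p (min 0 (b - p 0)) ≤ b := by
    have : p (min 0 (b - p 0)) - min 0 (b - p 0) ≤ p 0 - 0 := hmono (min_le_left _ _)
    omega
  obtain ⟨j, hj, hmax⟩ := Int.exists_greatest_of_bdd ⟨_, hbdd⟩ ⟨_, hexists⟩
  refine ⟨j, hj, not_le.mp fun hj' => ?_⟩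
  have := hmax (j + 1) hj'
  omega

-- `g.drop s` is the part at nonnegative positions of the block that contains position `0`.
theorem PrefixAverageLE.exists_drop_of_mem_Xseq (h : PrefixAverageLE 𝒢 ψ a) (hx : x ∈ Xseq 𝒢) :
    ∃ g ∈ 𝒢, ∃ s : ℕ, (∀ (l : ℕ) (hl : l < (g.drop s).length), x l = (g.drop s)[l]) ∧
      ∀ n, birkhoff (fun y => ψ (y 0)) n ((shift d)^[(g.drop s).length] x) ≤ n * a := by
  obtain ⟨p, hp⟩ := hx
  obtain ⟨j, hj, hj'⟩ := exists_le_lt_of_strictMono hp.1 0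
  obtain ⟨g, hg, hnext, hblock⟩ := hp.2 j
  obtain ⟨s, hs⟩ := Int.exists_eq_neg_ofNat hj
  have hlen : ((g.drop s).length : ℤ) = p (j + 1) := by
    rw [List.length_drop]
    omega
  refine ⟨g, hg, s, fun l hl => ?_, fun n => ?_⟩
  · rw [List.length_drop] at hl
    rw [List.getElem_drop, ← hblock (s + l) (by omega), hs]
    push_cast
    ring_nf
  · rw [birkhoff_shift_iterate, hlen]
    exact h.sum_le_of_isParsing hp n (j + 1)

theorem PrefixAverageLE.birkhoff_le_of_length_le (h : PrefixAverageLE 𝒢 ψ a) {L : ℕ} {M : ℝ}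
    (hL : ∀ g ∈ 𝒢, g.length ≤ L) (hM : ∀ b, ψ b ≤ M) (hx : x ∈ Xseq 𝒢) (n : ℕ) :
    birkhoff (fun y => ψ (y 0)) n x ≤ n * a + L * |M - a| := by
  obtain ⟨g, hg, s, -, htail⟩ := h.exists_drop_of_mem_Xseq hx
  set t := (g.drop s).length
  have htL : min n t ≤ L :=
    (min_le_right _ _).trans ((List.drop_sublist s g).length_le.trans (hL g hg))
  have hsplit : (n : ℝ) = (min n t : ℕ) + (n - t : ℕ) := by
    norm_cast
    omega
  calc birkhoff (fun y => ψ (y 0)) n x ≤ (min n t : ℕ) * M + (n - t : ℕ) * a :=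
        birkhoffSum_le_of_tail_le (T := shift d) (φ := fun y => ψ (y 0)) (fun y => hM (y 0)) htail n
    _ = n * a + (min n t : ℕ) * (M - a) := by
        rw [hsplit]
        ring
    _ ≤ n * a + (min n t : ℕ) * |M - a| := by
        gcongr
        exact le_abs_self _
    _ ≤ n * a + L * |M - a| := by gcongr

theorem PrefixAverageLE.pressure_codedShift_le (h : PrefixAverageLE 𝒢 ψ a) (ha : 0 ≤ a)
    (h𝒢 : 𝒢.Finite) :
    pressure (codedShift 𝒢) (fun x => ψ (x 0)) ≤ a + Real.log d := by
  obtain ⟨L, hL⟩ := (h𝒢.image List.length).bddAbove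
  obtain ⟨M, hM⟩ := (Set.finite_range ψ).bddAbove
  have hsum : ∀ n, ∀ x ∈ Xseq 𝒢, birkhoff (fun y => ψ (y 0)) n x ≤ n * a + L * |M - a| :=
    fun n x hx => h.birkhoff_le_of_length_le (fun g hg => hL (Set.mem_image_of_mem _ hg))
      (fun b => hM (Set.mem_range_self b)) hx n
  have hconst : (fun _ : ℕ => L * |M - a|) =o[atTop] fun n : ℕ => (n : ℝ) :=
    Asymptotics.isLittleO_const_left.mpr
      (.inr (tendsto_norm_atTop_atTop.comp tendsto_natCast_atTop_atTop))
  refine pressure_le_of_Zfun_le_exp (continuous_comp_apply_zero ψ)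
    (add_nonneg ha (Real.log_natCast_nonneg d)) hconst fun n => ?_
  calc Zfun (codedShift 𝒢) (fun x => ψ (x 0)) n
      ≤ ∑ _i ∈ {()}, (Finset.univ : Finset (Fin n → Fin d)).card
          * Real.exp (n * a + L * |M - a|) :=
        Zfun_closure_le_sum (continuous_comp_apply_zero ψ) fun x hx =>
          ⟨(), by simp, Finset.mem_univ _, hsum n x hx⟩
    _ = (d : ℝ) ^ n * Real.exp (n * a + L * |M - a|) := by simp
    _ ≤ Real.exp (n * Real.log d) * Real.exp (n * a + L * |M - a|) := by
        rw [Real.exp_nat_mul]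
        gcongr
        exact Real.le_exp_log _
    _ = Real.exp (n * (a + Real.log d) + L * |M - a|) := by
        rw [← Real.exp_add]
        ring_nf

theorem PrefixAverageLE.integral_le {μ : Measure (FullShift d)} [IsProbabilityMeasure μ]
    (h : PrefixAverageLE 𝒢 ψ a) (hμ : MeasurePreserving (shift d) μ μ) (hXseq : μ (Xseq 𝒢) = 1) :
    ∫ x, ψ (x 0) ∂μ ≤ a := by
  have hψ : Continuous fun x : FullShift d => ψ (x 0) := continuous_comp_apply_zero ψ
  obtain ⟨M, hM⟩ := (Set.finite_range fun b => ‖ψ b‖).bddAbove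
  have hψM : ∀ x : FullShift d, ‖ψ (x 0)‖ ≤ M := fun x => hM ⟨x 0, rfl⟩
  -- `Xseq 𝒢` is not known to be measurable, but this superset of it is.
  have hE_meas : MeasurableSet {x : FullShift d | ∃ t : ℕ, ∀ n : ℕ,
      birkhoff (fun y => ψ (y 0)) n ((shift d)^[t] x) ≤ n * a} := by
    simp only [Set.ofPred_exists, Set.ofPred_forall]
    exact .iUnion fun t => .iInter fun n => (isClosed_le
      ((continuous_birkhoff hψ n).comp (continuous_shift.iterate t))
      continuous_const).measurableSet
  have htail : ∀ᵐ x ∂μ, ∃ t : ℕ, ∀ n : ℕ,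
      birkhoff (fun y => ψ (y 0)) n ((shift d)^[t] x) ≤ n * a := by
    refine (mem_ae_iff_prob_eq_one hE_meas).mpr (le_antisymm prob_le_one ?_)
    rw [← hXseq]
    refine measure_mono fun x hx => ?_
    obtain ⟨g, -, s, -, hs⟩ := h.exists_drop_of_mem_Xseq hx
    exact ⟨_, hs⟩
  refine integral_le_of_ae_birkhoffAverage_lt hμ
    (.of_bound hψ.aestronglyMeasurable M (.of_forall hψM))
    (fun x => (le_abs_self _).trans (hψM x)) ?_
  filter_upwards [htail] with x ⟨t, ht⟩ b hb
  exact eventually_birkhoffAverage_lt_of_tail_le ht hb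

theorem PrefixAverageLE.PseqOf_codedShift_le (h : PrefixAverageLE 𝒢 ψ a) (ha : 0 ≤ a) :
    PseqOf (codedShift 𝒢) (Xseq 𝒢) (fun x => ψ (x 0)) ≤ a + Real.log d :=
  PseqOf_le_of_integral_le ha fun _ ⟨_, hmap, _⟩ hXseq =>
    h.integral_le ⟨continuous_shift.measurable, hmap⟩ hXseq

theorem mem_Xseq_of_periodic {g : List (Fin d)} (hg : g ∈ 𝒢) (c : ℤ)
    (hx : ∀ i, g[((i + c) % g.length).toNat]? = some (x i)) : x ∈ Xseq 𝒢 := by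
  have hpos : 0 < g.length := by
    refine List.length_pos_iff.mpr fun hnil => ?_
    simpa [hnil] using hx 0
  refine ⟨fun j => g.length * j - c, fun i j hij => ?_, fun j => ⟨g, hg, by ring, fun l hl => ?_⟩⟩
  · have := mul_lt_mul_of_pos_left hij (Int.natCast_pos.mpr hpos)
    simp only
    omega
  · have h := hx (g.length * j - c + l)
    rw [show g.length * j - c + l + c = (l : ℤ) + g.length * j by ring, Int.add_mul_emod_self_left,
      Int.emod_eq_of_lt (by omega) (by omega), Int.toNat_natCast, List.getElem?_eq_getElem hl] at h
    exact (Option.some.inj h).symm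

theorem mem_codedShift_of_forall_window
    (h : ∀ N : ℕ, ∃ g ∈ 𝒢, ∃ c : ℕ, ∀ l ≤ 2 * N, g[c + l]? = some (x (l - N))) :
    x ∈ codedShift 𝒢 := by
  choose g hg c hc using h
  have hlen : ∀ N, c N + 2 * N < (g N).length := fun N =>
    (List.getElem?_eq_some_iff.mp (hc N (2 * N) le_rfl)).1
  let y : ℕ → FullShift d := fun N (i : ℤ) => (g N)[((i + (N + c N)) % (g N).length).toNat]'(by
    have := Int.emod_lt_of_pos (i + (N + c N)) (Int.natCast_pos.mpr (Nat.zero_lt_of_lt (hlen N)))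
    have := hlen N
    omega)
  have hy : ∀ N (i : ℤ), (g N)[((i + (N + c N)) % (g N).length).toNat]? = some (y N i) := fun N i =>
    List.getElem?_eq_getElem _
  refine mem_closure_of_tendsto (f := y) (b := atTop) (tendsto_pi_nhds.mpr fun i => ?_)
    (.of_forall fun N => mem_Xseq_of_periodic (hg N) _ (hy N))
  refine tendsto_const_nhds.congr' ?_
  filter_upwards [eventually_ge_atTop i.natAbs] with N hN
  have hwindow := hc N (i + N).toNat (by omega)
  have hyi := hy N i
  have := hlen N
  rw [Int.emod_eq_of_lt (by omega) (by omega),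
    show (i + (N + c N)).toNat = c N + (i + N).toNat by omega, hwindow,
    show ((i + N).toNat : ℤ) - N = i by omega] at hyi
  exact Option.some.inj hyi

end CodedShift
/-! ### The generators `(000)^k 1^k` -/

section Example

theorem continuous_exφ : Continuous exφ :=
  continuous_comp_apply_zero fun b : Fin 2 => if b = 1 then (1 : ℝ) else 0

theorem exφ_le_one (x : FullShift 2) : exφ x ≤ 1 := by
  unfold exφ
  split_ifs <;> norm_num

theorem sum_take_exG (k n : ℕ) :
    (((exG k).take n).map fun b => if b = 1 then (1 : ℝ) else 0).sum
      = (min (n - 3 * (k + 1)) (k + 1) : ℕ) := by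
  simp [exG, List.take_append, List.take_replicate]

theorem prefixAverageLE_exG (K : Set ℕ) :
    PrefixAverageLE (exG '' K) (fun b => if b = 1 then 1 else 0) (1 / 4) := by
  rintro _ ⟨k, -, rfl⟩ n -
  have hones : min (n - 3 * (k + 1)) (k + 1) * 4 ≤ n := by omega
  rw [sum_take_exG, mul_one_div, le_div_iff₀ four_pos]
  exact_mod_cast hones

theorem getElem_drop_exG (k s l : ℕ) (hl : l < ((exG k).drop s).length) :
    ((exG k).drop s)[l] = if l < 3 * (k + 1) - s then 0 else 1 := by
  simp only [exG, List.getElem_drop, List.getElem_append, List.length_replicate,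
    List.getElem_replicate, dite_eq_ite, Nat.lt_sub_iff_add_lt']

theorem exists_initial_segment_of_mem_Xseq_exG (K : Set ℕ) {x : FullShift 2}
    (hx : x ∈ Xseq (exG '' K)) (n : ℕ) :
    ∃ i ≤ n, ∃ t ≤ n, (∀ l < t, x l = if l < i then 0 else 1) ∧
      birkhoff exφ n x ≤ t + (n - t : ℕ) * (1 / 4) := by
  obtain ⟨_, ⟨k, -, rfl⟩, s, hseg, htail⟩ := (prefixAverageLE_exG K).exists_drop_of_mem_Xseq hx
  set t := ((exG k).drop s).length
  refine ⟨min n (3 * (k + 1) - s), min_le_left _ _, min n t, min_le_left _ _, fun l hl => ?_, ?_⟩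
  · rw [hseg l (by omega), getElem_drop_exG]
    grind
  · have h := birkhoffSum_le_of_tail_le exφ_le_one htail n
    rwa [mul_one, show n - t = n - min n t by omega] at h

theorem const_one_mem_codedShift : (fun _ => 1 : FullShift 2) ∈ codedShift (Set.range exG) := by
  refine mem_codedShift_of_forall_window fun N => ⟨exG (2 * N), ⟨_, rfl⟩, 3 * (2 * N + 1), ?_⟩
  intro l hl
  rw [exG, List.getElem?_append_right (by simp), List.length_replicate, Nat.add_sub_cancel_left,
    List.getElem?_replicate, if_pos (Nat.lt_succ_of_le hl)]

theorem quarter_add_log_two_lt_one : 1 / 4 + Real.log 2 < 1 := by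
  linarith [Real.log_two_lt_d9]

theorem two_pow_mul_exp_le {n t : ℕ} (ht : t ≤ n) :
    (2 : ℝ) ^ (n - t) * Real.exp (t + (n - t : ℕ) * (1 / 4)) ≤ Real.exp n := by
  calc (2 : ℝ) ^ (n - t) * Real.exp (t + (n - t : ℕ) * (1 / 4))
      = Real.exp (t + (n - t : ℕ) * (1 / 4 + Real.log 2)) := by
        rw [mul_add, ← add_assoc, Real.exp_add _ (_ * Real.log 2), Real.exp_nat_mul,
          Real.exp_log two_pos, mul_comm]
    _ ≤ Real.exp (t + (n - t : ℕ) * 1) := by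
        gcongr
        exact quarter_add_log_two_lt_one.le
    _ = Real.exp n := by
        rw [Nat.cast_sub ht]
        ring_nf

theorem Zfun_codedShift_exG_le (K : Set ℕ) (n : ℕ) :
    Zfun (codedShift (exG '' K)) exφ n ≤ (n + 1) ^ 2 * Real.exp n := by
  let W : ℕ × ℕ → Finset (Fin n → Fin 2) := fun q =>
    Finset.univ.filter fun w => ∀ l : Fin n, (l : ℕ) < q.2 → w l = if (l : ℕ) < q.1 then 0 else 1
  calc Zfun (codedShift (exG '' K)) exφ n
      ≤ ∑ q ∈ Finset.range (n + 1) ×ˢ Finset.range (n + 1),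
          (W q).card * Real.exp (q.2 + (n - q.2 : ℕ) * (1 / 4)) := by
        refine Zfun_closure_le_sum continuous_exφ fun x hx => ?_
        obtain ⟨i, hi, t, ht, hseg, hsum⟩ := exists_initial_segment_of_mem_Xseq_exG K hx n
        refine ⟨(i, t), ?_, ?_, hsum⟩
        · simp only [Finset.mem_product, Finset.mem_range]
          omega
        · exact Finset.mem_filter.mpr ⟨Finset.mem_univ _, fun l hl => hseg l hl⟩
    _ ≤ ∑ _q ∈ Finset.range (n + 1) ×ˢ Finset.range (n + 1), Real.exp n := by
        refine Finset.sum_le_sum fun q hq => ?_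
        have ht : q.2 ≤ n := Nat.lt_succ_iff.mp (Finset.mem_range.mp (Finset.mem_product.mp hq).2)
        rw [card_filter_forall_lt_eq, Fintype.card_fin, Nat.cast_pow, Nat.cast_ofNat]
        exact two_pow_mul_exp_le ht
    _ = (n + 1) ^ 2 * Real.exp n := by
        simp [sq]

theorem pressure_codedShift_exG_image_le {K : Set ℕ} (hK : K.Finite) :
    pressure (codedShift (exG '' K)) exφ ≤ 1 / 4 + Real.log 2 :=
  (prefixAverageLE_exG K).pressure_codedShift_le (by norm_num) (hK.image exG)

theorem PseqOf_codedShift_exG_image_le (K : Set ℕ) :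
    PseqOf (codedShift (exG '' K)) (Xseq (exG '' K)) exφ ≤ 1 / 4 + Real.log 2 :=
  (prefixAverageLE_exG K).PseqOf_codedShift_le (by norm_num)

theorem pressure_codedShift_exG : pressure (codedShift (Set.range exG)) exφ = 1 := by
  have hexp : ∀ n : ℕ, Real.exp (n * 1 + 2 * Real.log (n + 1)) = (n + 1) ^ 2 * Real.exp n := by
    intro n
    rw [mul_one, Real.exp_add, two_mul, Real.exp_add, Real.exp_log (by positivity)]
    ring
  refine le_antisymm ?_ (le_pressure_of_isFixedPt continuous_exφ const_one_mem_codedShift rfl)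
  refine pressure_le_of_Zfun_le_exp continuous_exφ zero_le_one
    (isLittleO_log_add_one.const_mul_left 2) fun n => ?_
  rw [hexp, ← Set.image_univ]
  exact Zfun_codedShift_exG_le Set.univ n

end Example

/-- for the coded shift generated by `{(000)^k 1^k : k ∈ ℕ}` and the
indicator potential of `{x_0 = 1}`: `P_top(X,φ) = 1`, attained by the Dirac measure at
the fixed point `1^∞`; `P_seq(φ) ≤ 1/4 + log 2 < 1`; each finite approximation
satisfies `P_top(X_m,φ) ≤ 1/4 + log 2`; and `φ ∉ FSP(X)`, i.e.
`P_seq(φ) < P_top(X,φ)`. -/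
theorem statement17 :
    pressure (codedShift (Set.range exG)) exφ = 1 ∧
      IsEqState (codedShift (Set.range exG)) exφ
        (Measure.dirac (fun _ => (1 : Fin 2))) ∧
      PseqOf (codedShift (Set.range exG)) (Xseq (Set.range exG)) exφ
        ≤ 1 / 4 + Real.log 2 ∧
      1 / 4 + Real.log 2 < 1 ∧
      (∀ m : ℕ, pressure (codedShift (exG '' {i | i < m})) exφ ≤ 1 / 4 + Real.log 2) ∧
      PseqOf (codedShift (Set.range exG)) (Xseq (Set.range exG)) exφ
        < pressure (codedShift (Set.range exG)) exφ := by
  have hpressure := pressure_codedShift_exG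
  have hPseq := PseqOf_codedShift_exG_image_le Set.univ
  rw [Set.image_univ] at hPseq
  have hlog := quarter_add_log_two_lt_one
  exact ⟨hpressure, isEqState_dirac const_one_mem_codedShift rfl hpressure.symm, hPseq, hlog,
    fun m => pressure_codedShift_exG_image_le (Set.finite_lt_nat m),
    hpressure.symm ▸ hPseq.trans_lt hlog⟩

end PaperStmt
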